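/- arXiv:1309.3675 — 12 statements merged into one kernel-verified Lean document; each statement's English description precedes it below -/
import Mathlib

section
/- For all real numbers x, y with x ≥ 0, y ≥ 0 and x + y ≤ 1, one has (1 − x/2)^2 · exp(−y) + (2/e)·x + (3/(2e))·y ≤ 1. -/
/-!
For fixed `y` the left-hand side is a convex quadratic in `x`, so it suffices to bound it at the
endpoints `x = 0` and `x = 1 - y`. At `x = 0` the chord of the convex function `exp (-y)` over
`[0, 1]` reduces the claim to `5 / 2 ≤ e`. At `x = 1 - y` the bounds `1 + y + y ^ 2 / 2 ≤ exp y` and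
`19 / 7 ≤ e` (a continued fraction convergent of `e`) reduce it to
`0 ≤ (1 - 2 * y) ^ 2 + y ^ 2 + 7 * y ^ 3`.
-/

open Real Set

lemma convexOn_quadratic {a : ℝ} (ha : 0 ≤ a) (b c : ℝ) :
    ConvexOn ℝ univ fun x : ℝ => a * x ^ 2 + b * x + c := by
  have hsq : ConvexOn ℝ univ fun x : ℝ => a * x ^ 2 := even_two.convexOn_pow.smul ha
  have hlin : ConvexOn ℝ univ fun x : ℝ => b * x := (LinearMap.mul ℝ ℝ b).convexOn convex_univ
  exact (hsq.add hlin).add_const c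

lemma exp_neg_le_chord {y : ℝ} (hy₀ : 0 ≤ y) (hy₁ : y ≤ 1) :
    exp (-y) ≤ 1 - y + y * exp (-1) := by
  simpa using convexOn_exp.2 (mem_univ 0) (mem_univ (-1)) (sub_nonneg.2 hy₁) hy₀
    (sub_add_cancel 1 y)

lemma inv_exp_one_le_seven_div_nineteen : (exp 1)⁻¹ ≤ 7 / 19 := by
  rw [inv_le_comm₀ (exp_pos 1) (by norm_num)]
  linarith [exp_one_gt_d9]

lemma exp_neg_add_three_halves_inv_exp_one_mul_le_one {y : ℝ} (hy₀ : 0 ≤ y) (hy₁ : y ≤ 1) :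
    exp (-y) + 3 / 2 * (exp 1)⁻¹ * y ≤ 1 :=
  calc exp (-y) + 3 / 2 * (exp 1)⁻¹ * y
      ≤ 1 - y + y * (exp 1)⁻¹ + 3 / 2 * (exp 1)⁻¹ * y := by
        rw [← exp_neg 1]
        gcongr
        exact exp_neg_le_chord hy₀ hy₁
    _ = 1 - y * (1 - 5 / 2 * (exp 1)⁻¹) := by ring
    _ ≤ 1 := sub_le_self _ (mul_nonneg hy₀ (by linarith [inv_exp_one_le_seven_div_nineteen]))

lemma sq_half_one_add_mul_exp_neg_le_linear {y : ℝ} (hy : 0 ≤ y) :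
    ((1 + y) / 2) ^ 2 * exp (-y) ≤ (10 + 7 * y) / 38 := by
  rw [exp_neg, ← div_eq_mul_inv, div_le_iff₀ (exp_pos y)]
  have hpoly : 0 ≤ (1 - 2 * y) ^ 2 + y ^ 2 + 7 * y ^ 3 := by positivity
  calc ((1 + y) / 2) ^ 2
      ≤ (10 + 7 * y) / 38 * (1 + y + y ^ 2 / 2) := by linarith
    _ ≤ (10 + 7 * y) / 38 * exp y := by
        gcongr
        exact quadratic_le_exp_of_nonneg hy

lemma sq_half_one_add_mul_exp_neg_add_le_one {y : ℝ} (hy₀ : 0 ≤ y) (hy₄ : y ≤ 4) :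
    ((1 + y) / 2) ^ 2 * exp (-y) + (2 - y / 2) * (exp 1)⁻¹ ≤ 1 :=
  calc ((1 + y) / 2) ^ 2 * exp (-y) + (2 - y / 2) * (exp 1)⁻¹
      ≤ (10 + 7 * y) / 38 + (2 - y / 2) * (7 / 19) :=
        add_le_add (sq_half_one_add_mul_exp_neg_le_linear hy₀)
          (mul_le_mul_of_nonneg_left inv_exp_one_le_seven_div_nineteen (by linarith))
    _ = 1 := by ring

theorem stmt_0 (x y : ℝ) (hx : 0 ≤ x) (hy : 0 ≤ y) (hxy : x + y ≤ 1) :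
    (1 - x / 2) ^ 2 * Real.exp (-y) + (2 / Real.exp 1) * x + (3 / (2 * Real.exp 1)) * y ≤ 1 := by
  have hconv : ConvexOn ℝ univ fun t : ℝ =>
      (1 - t / 2) ^ 2 * exp (-y) + 2 / exp 1 * t + 3 / (2 * exp 1) * y := by
    convert convexOn_quadratic (div_nonneg (exp_pos (-y)).le zero_le_four)
      (2 / exp 1 - exp (-y)) (exp (-y) + 3 / (2 * exp 1) * y) using 2
    ring
  have hx_mem : x ∈ Icc 0 (1 - y) := ⟨hx, by linarith⟩
  refine (hconv.le_max_of_mem_Icc (mem_univ _) (mem_univ _) hx_mem).trans (max_le ?_ ?_)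
  · refine le_of_eq_of_le ?_ (exp_neg_add_three_halves_inv_exp_one_mul_le_one hy (by linarith))
    ring
  · refine le_of_eq_of_le ?_ (sq_half_one_add_mul_exp_neg_add_le_one hy (by linarith))
    ring
end

section
/- For every real x ∈ [0,1], one has (x/2 − 1)^2 · exp(x − 1) + x/(2e) + 3/(2e) ≤ 1. -/
/-!
Substitute `u = 1 - x` and multiply by `exp u`: the inequality becomes
`(1 + u) ^ 2 / 4 ≤ exp u * (1 - (4 - u) / 2 * exp (-1))`, and its range `x ≤ 2` becomes `-1 ≤ u`.
For `u ≥ 0` replace `exp u` by its lower bound `1 + u + u ^ 2 / 2`; what remains is a cubic in `u`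
with positive leading coefficient whose quadratic part has negative discriminant. For
`-1 ≤ u ≤ 0` the tangent bound `1 + u ≤ exp u` suffices: cancelling the factor `1 + u` leaves an
inequality that is linear in `u`.
-/

open Real

section Polynomial

variable {s u : ℝ}

lemma one_add_div_four_le_of_nonpos (hs : s ≤ 3 / 8) (hu : u ≤ 0) :
    (1 + u) / 4 ≤ 1 - (4 - u) / 2 * s := by
  have mul_s_le : (4 - u) / 2 * s ≤ (4 - u) / 2 * (3 / 8) := by gcongr; linarith
  linarith

lemma one_add_sq_div_four_le_of_nonneg (hs : 0 ≤ s) (hs' : s ≤ 0.368) (hu : 0 ≤ u) :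
    (1 + u) ^ 2 / 4 ≤ (1 + u + u ^ 2 / 2) * (1 - (4 - u) / 2 * s) := by
  have quadratic_nonneg : 0 ≤ 0.014 - 0.052 * u + 0.066 * u ^ 2 := by
    linarith [sq_nonneg (u - 2 / 5)]
  -- The slack is affine in `s`; at `s = 0.368` its quadratic part is the one above.
  have slack_eq : (1 + u + u ^ 2 / 2) * (1 - (4 - u) / 2 * s) - (1 + u) ^ 2 / 4 =
      (0.014 - 0.052 * u + 0.066 * u ^ 2) + (0.368 - s) * (2 + 3 / 2 * u + u ^ 2 / 2) +
        s / 4 * u ^ 3 := by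
    ring
  have correction_nonneg : 0 ≤ (0.368 - s) * (2 + 3 / 2 * u + u ^ 2 / 2) :=
    mul_nonneg (sub_nonneg.2 hs') (by positivity)
  have cubic_nonneg : 0 ≤ s / 4 * u ^ 3 := by positivity
  rw [← sub_nonneg, slack_eq]
  exact add_nonneg (add_nonneg quadratic_nonneg correction_nonneg) cubic_nonneg

end Polynomial

lemma one_add_sq_div_four_le_exp_mul {u : ℝ} (hu : -1 ≤ u) :
    (1 + u) ^ 2 / 4 ≤ exp u * (1 - (4 - u) / 2 * exp (-1)) := by
  have exp_neg_one_le : exp (-1) ≤ 0.368 := exp_neg_one_lt_d9.le.trans (by norm_num)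
  have factor_nonneg : 0 ≤ 1 - (4 - u) / 2 * exp (-1) := by
    have mul_exp_le : (4 - u) / 2 * exp (-1) ≤ 5 / 2 * 0.368 := by gcongr; linarith
    linarith
  rcases le_total 0 u with hu₀ | hu₀
  · calc (1 + u) ^ 2 / 4
        ≤ (1 + u + u ^ 2 / 2) * (1 - (4 - u) / 2 * exp (-1)) :=
          one_add_sq_div_four_le_of_nonneg (exp_pos _).le exp_neg_one_le hu₀
      _ ≤ exp u * (1 - (4 - u) / 2 * exp (-1)) := by
          gcongr
          exact quadratic_le_exp_of_nonneg hu₀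
  · calc (1 + u) ^ 2 / 4
        = (1 + u) * ((1 + u) / 4) := by ring
      _ ≤ (1 + u) * (1 - (4 - u) / 2 * exp (-1)) := by
          gcongr
          · linarith
          · exact one_add_div_four_le_of_nonpos (by linarith) hu₀
      _ ≤ exp u * (1 - (4 - u) / 2 * exp (-1)) := by
          gcongr
          linarith [add_one_le_exp u]

theorem stmt_2_general {x : ℝ} (hx : x ≤ 2) :
    (x / 2 - 1) ^ 2 * exp (x - 1) + x / (2 * exp 1) + 3 / (2 * exp 1) ≤ 1 := by
  have core : (1 + (1 - x)) ^ 2 / 4 ≤ exp (1 - x) * (1 - (4 - (1 - x)) / 2 * exp (-1)) :=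
    one_add_sq_div_four_le_exp_mul (by linarith)
  have exp_mul_exp : exp (1 - x) * exp (x - 1) = 1 := by
    rw [← exp_add, sub_add_sub_cancel, sub_self, exp_zero]
  calc (x / 2 - 1) ^ 2 * exp (x - 1) + x / (2 * exp 1) + 3 / (2 * exp 1)
      = (1 + (1 - x)) ^ 2 / 4 * exp (x - 1) + (4 - (1 - x)) / 2 * exp (-1) := by
        rw [exp_neg]
        field_simp
        ring
    _ ≤ exp (1 - x) * (1 - (4 - (1 - x)) / 2 * exp (-1)) * exp (x - 1) +
          (4 - (1 - x)) / 2 * exp (-1) := by gcongr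
    _ = 1 := by linear_combination (1 - (4 - (1 - x)) / 2 * exp (-1)) * exp_mul_exp

theorem stmt_2 (x : ℝ) (hx : x ∈ Set.Icc (0:ℝ) 1) :
    (x / 2 - 1) ^ 2 * Real.exp (x - 1) + x / (2 * Real.exp 1) + 3 / (2 * Real.exp 1) ≤ 1 :=
  stmt_2_general (hx.2.trans one_le_two)
end

section
/- Let k ∈ ℕ and let γ : Fin k → ℝ satisfy 0 ≤ γ i ≤ 1 for every i. Then 1 − ∏_{i} (1 − γ i) ≥ (1 − 1/e) · min(∑_{i} γ i, 1). -/
/-!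
Since `1 - γ ≤ exp (-γ)`, the product is at most `exp (-∑ γ)`. The function `1 - exp (-x)` is
concave, so on `[0, 1]` it lies above its chord `(1 - 1 / e) * x`; it is increasing, so beyond `1`
it stays above `1 - 1 / e`.
-/

theorem prod_one_sub_le_exp_neg_sum {ι : Type*} {s : Finset ι} {γ : ι → ℝ}
    (hγ : ∀ i ∈ s, γ i ≤ 1) : ∏ i ∈ s, (1 - γ i) ≤ Real.exp (-∑ i ∈ s, γ i) := by
  rw [← Finset.sum_neg_distrib, Real.exp_sum]
  exact Finset.prod_le_prod (fun i hi ↦ sub_nonneg.2 (hγ i hi))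
    fun i _ ↦ Real.one_sub_le_exp_neg (γ i)

theorem exp_mul_le_one_add_mul_exp_sub_one (a : ℝ) {t : ℝ} (ht₀ : 0 ≤ t) (ht₁ : t ≤ 1) :
    Real.exp (a * t) ≤ 1 + t * (Real.exp a - 1) := by
  have bernoulli : (1 + (Real.exp a - 1)) ^ t ≤ 1 + t * (Real.exp a - 1) :=
    rpow_one_add_le_one_add_mul_self (by linarith [Real.exp_pos a]) ht₀ ht₁
  rwa [add_sub_cancel, ← Real.exp_mul] at bernoulli

theorem one_sub_one_div_exp_one_mul_min_le_one_sub_exp_neg {x : ℝ} (hx : 0 ≤ x) :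
    (1 - 1 / Real.exp 1) * min x 1 ≤ 1 - Real.exp (-x) := by
  have chord : Real.exp (-1 * min x 1) ≤ 1 + min x 1 * (Real.exp (-1) - 1) :=
    exp_mul_le_one_add_mul_exp_sub_one (-1) (le_min hx zero_le_one) (min_le_right x 1)
  have antitone : Real.exp (-x) ≤ Real.exp (-1 * min x 1) :=
    Real.exp_le_exp.2 (by linarith [min_le_left x 1])
  rw [one_div, ← Real.exp_neg]
  linarith

theorem stmt_3_general {ι : Type*} {s : Finset ι} {γ : ι → ℝ} (hγ : ∀ i ∈ s, γ i ≤ 1)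
    (hsum : 0 ≤ ∑ i ∈ s, γ i) :
    (1 - 1 / Real.exp 1) * min (∑ i ∈ s, γ i) 1 ≤ 1 - ∏ i ∈ s, (1 - γ i) :=
  calc (1 - 1 / Real.exp 1) * min (∑ i ∈ s, γ i) 1
      ≤ 1 - Real.exp (-∑ i ∈ s, γ i) := one_sub_one_div_exp_one_mul_min_le_one_sub_exp_neg hsum
    _ ≤ 1 - ∏ i ∈ s, (1 - γ i) := sub_le_sub_left (prod_one_sub_le_exp_neg_sum hγ) 1

theorem stmt_3 (k : ℕ) (γ : Fin k → ℝ) (hγ : ∀ i, 0 ≤ γ i ∧ γ i ≤ 1) :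
    1 - ∏ i, (1 - γ i) ≥ (1 - 1 / Real.exp 1) * min (∑ i, γ i) 1 :=
  stmt_3_general (fun i _ ↦ (hγ i).2) (Finset.sum_nonneg fun i _ ↦ (hγ i).1)
end

section
/- Let t₁ ≤ t₂ be integers, let c ∈ ℕ, and let a : ℤ → ℕ satisfy a τ = 0 for τ ∉ [t₁, t₂). Suppose that for every integer t with t₁ ≤ t < t₂ one has ∑_{τ = t}^{t₂ − 1} a τ ≤ (t₂ − t) + c. Then there exists an injective function g from the set of pairs {(τ, i) : t₁ ≤ τ < t₂, i ∈ Fin (a τ)} into ℤ such that for every such pair (τ, i): τ ≤ g(τ, i) < t₂ + c, and moreover g(τ, 0) = τ whenever a τ ≥ 1. -/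
/-!
Let `b = t₂ + c` be the end of the freed-up slots. By Hall's theorem it suffices to check the
marriage condition when a first transmission at `τ` may only use the slot `τ` and an overflowed one
may use any slot of `[τ, b)`. Given a finite set `S` of transmissions, let `m` be the earliest time
of an overflowed one in `S`. The transmissions before `m` are all first ones, so they own pairwise
distinct slots before `m`. Those from `m` on number at most `∑_{τ ≥ m} a τ ≤ b - m`, and the
overflowed one at `m` alone already gives access to all of `[m, b)`.
-/

open Finset

theorem card_le_sum_card_of_forall_fst_mem {ι : Type*} {β : ι → Type*} [∀ i, Fintype (β i)]
    {S : Finset (Σ i, β i)} {T : Finset ι} (hST : ∀ p ∈ S, p.1 ∈ T) :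
    #S ≤ ∑ i ∈ T, Fintype.card (β i) :=
  calc #S ≤ #(T.sigma fun i ↦ (univ : Finset (β i))) :=
        card_le_card fun p hp ↦ mem_sigma.2 ⟨hST p hp, mem_univ p.2⟩
    _ = ∑ i ∈ T, Fintype.card (β i) := card_sigma _ _

theorem card_image_fst_of_forall_snd_eq_zero {α : Type*} [DecidableEq α] {a : α → ℕ}
    {S : Finset (Σ τ, Fin (a τ))} (hS : ∀ p ∈ S, p.2.val = 0) :
    #(S.image Sigma.fst) = #S := by
  refine card_image_of_injOn ?_
  rintro ⟨τ, i⟩ hi ⟨σ, j⟩ hj (rfl : τ = σ)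
  exact congrArg (Sigma.mk τ) (Fin.ext ((hS _ hi).trans (hS _ hj).symm))

theorem fst_lt_of_forall_eq_zero {α : Type*} [LinearOrder α] {a : α → ℕ} {e : α}
    (ha : ∀ τ, e ≤ τ → a τ = 0) (p : Σ τ, Fin (a τ)) : p.1 < e :=
  not_le.1 fun hp ↦ (Fin.pos p.2).ne' (ha p.1 hp)

section AdmissibleSlots

variable {α : Type*} [LinearOrder α] [LocallyFiniteOrder α] {a : α → ℕ} {b e : α}

/-- The slots to which the transmission `p = (τ, i)` may be moved when slots before the horizon `b`
are available: the first transmission (`i = 0`) must stay at `τ`, the overflowed ones (`i ≠ 0`) may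
use any slot of `[τ, b)`. -/
def admissibleSlots (b : α) (p : Σ τ, Fin (a τ)) : Finset α :=
  if p.2.val = 0 then {p.1} else Ico p.1 b

theorem admissibleSlots_of_eq_zero {p : Σ τ, Fin (a τ)} (hp : p.2.val = 0) :
    admissibleSlots b p = {p.1} :=
  if_pos hp

theorem admissibleSlots_of_ne_zero {p : Σ τ, Fin (a τ)} (hp : p.2.val ≠ 0) :
    admissibleSlots b p = Ico p.1 b :=
  if_neg hp

theorem fst_mem_admissibleSlots {p : Σ τ, Fin (a τ)} (hp : p.1 < b) :
    p.1 ∈ admissibleSlots b p := by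
  unfold admissibleSlots
  split_ifs
  · exact mem_singleton_self _
  · exact left_mem_Ico.2 hp

theorem admissibleSlots_subset_Ico {p : Σ τ, Fin (a τ)} (hp : p.1 < b) :
    admissibleSlots b p ⊆ Ico p.1 b := by
  unfold admissibleSlots
  split_ifs
  · exact singleton_subset_iff.2 (left_mem_Ico.2 hp)
  · exact Subset.rfl

theorem image_fst_subset_biUnion_admissibleSlots {S : Finset (Σ τ, Fin (a τ))}
    (hS : ∀ p ∈ S, p.1 < b) : S.image Sigma.fst ⊆ S.biUnion (admissibleSlots b) :=
  image_subset_iff.2 fun p hp ↦ mem_biUnion.2 ⟨p, hp, fst_mem_admissibleSlots (hS p hp)⟩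

theorem card_filter_fst_lt_add_card_Ico_le {S : Finset (Σ τ, Fin (a τ))}
    (hS : ∀ p ∈ S, p.1 < b) {q : Σ τ, Fin (a τ)} (hqS : q ∈ S) (hq : q.2.val ≠ 0)
    (hmin : ∀ p ∈ S, p.2.val ≠ 0 → q.1 ≤ p.1) :
    #{p ∈ S | p.1 < q.1} + #(Ico q.1 b) ≤ #(S.biUnion (admissibleSlots b)) := by
  set early := {p ∈ S | p.1 < q.1}
  have early_first : ∀ p ∈ early, p.2.val = 0 := fun p hp ↦ by
    obtain ⟨hpS, hlt⟩ := mem_filter.1 hp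
    exact not_not.1 fun hne ↦ (hmin p hpS hne).not_gt hlt
  have early_disjoint : Disjoint (early.image Sigma.fst) (Ico q.1 b) := by
    refine disjoint_left.2 fun x hx hxq ↦ ?_
    obtain ⟨p, hp, rfl⟩ := mem_image.1 hx
    exact (mem_filter.1 hp).2.not_ge (mem_Ico.1 hxq).1
  have early_subset : early.image Sigma.fst ⊆ S.biUnion (admissibleSlots b) :=
    (image_subset_image (filter_subset _ _)).trans (image_fst_subset_biUnion_admissibleSlots hS)
  have late_subset : Ico q.1 b ⊆ S.biUnion (admissibleSlots b) :=
    admissibleSlots_of_ne_zero (b := b) hq ▸ subset_biUnion_of_mem (admissibleSlots b) hqS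
  rw [← card_image_fst_of_forall_snd_eq_zero early_first, ← card_union_of_disjoint early_disjoint]
  exact card_le_card (union_subset early_subset late_subset)

theorem card_le_card_biUnion_admissibleSlots (heb : e ≤ b) (ha : ∀ τ, e ≤ τ → a τ = 0)
    (hsum : ∀ t, 1 < a t → ∑ τ ∈ Ico t e, a τ ≤ #(Ico t b)) (S : Finset (Σ τ, Fin (a τ))) :
    #S ≤ #(S.biUnion (admissibleSlots b)) := by
  have hS : ∀ p ∈ S, p.1 < b := fun p _ ↦ (fst_lt_of_forall_eq_zero ha p).trans_le heb
  rcases {p ∈ S | p.2.val ≠ 0}.eq_empty_or_nonempty with all_first | some_overflow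
  · rw [← card_image_fst_of_forall_snd_eq_zero fun p hp ↦
      not_not.1 (filter_eq_empty_iff.1 all_first hp)]
    exact card_le_card (image_fst_subset_biUnion_admissibleSlots hS)
  · obtain ⟨q, hq, hmin⟩ := exists_min_image _ Sigma.fst some_overflow
    obtain ⟨hqS, hq0⟩ := mem_filter.1 hq
    have late_card : #{p ∈ S | ¬ p.1 < q.1} ≤ ∑ τ ∈ Ico q.1 e, a τ := by
      simpa only [Fintype.card_fin] using card_le_sum_card_of_forall_fst_mem fun p hp ↦
        mem_Ico.2 ⟨not_lt.1 (mem_filter.1 hp).2, fst_lt_of_forall_eq_zero ha p⟩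
    calc #S = #{p ∈ S | p.1 < q.1} + #{p ∈ S | ¬ p.1 < q.1} :=
          (card_filter_add_card_filter_not _).symm
      _ ≤ #{p ∈ S | p.1 < q.1} + #(Ico q.1 b) := by
          gcongr
          exact late_card.trans (hsum q.1 (by lia))
      _ ≤ #(S.biUnion (admissibleSlots b)) :=
          card_filter_fst_lt_add_card_Ico_le hS hqS hq0 fun p hp hp0 ↦
            hmin p (mem_filter.2 ⟨hp, hp0⟩)

theorem stmt_6_general (heb : e ≤ b) (ha : ∀ τ, e ≤ τ → a τ = 0)
    (hsum : ∀ t, 1 < a t → ∑ τ ∈ Ico t e, a τ ≤ #(Ico t b)) :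
    ∃ g : (Σ τ, Fin (a τ)) → α,
      Function.Injective g ∧
      (∀ p, p.1 ≤ g p ∧ g p < b) ∧
      ∀ (τ : α) (h : 0 < a τ), g ⟨τ, ⟨0, h⟩⟩ = τ := by
  obtain ⟨g, g_injective, hg⟩ := (all_card_le_biUnion_card_iff_exists_injective _).1
    (card_le_card_biUnion_admissibleSlots heb ha hsum)
  refine ⟨g, g_injective, fun p ↦ ?_, fun τ h ↦ ?_⟩
  · have fst_lt : p.1 < b := (fst_lt_of_forall_eq_zero ha p).trans_le heb
    exact mem_Ico.1 (admissibleSlots_subset_Ico fst_lt (hg p))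
  · have slots_eq : admissibleSlots b ⟨τ, ⟨0, h⟩⟩ = {τ} := admissibleSlots_of_eq_zero rfl
    exact mem_singleton.1 (slots_eq ▸ hg _)

end AdmissibleSlots

theorem stmt_6 (t₁ t₂ : ℤ) (h12 : t₁ ≤ t₂) (c : ℕ) (a : ℤ → ℕ)
    (hout : ∀ τ : ℤ, ¬(t₁ ≤ τ ∧ τ < t₂) → a τ = 0)
    (hsum : ∀ t : ℤ, t₁ ≤ t → t < t₂ →
      (∑ τ ∈ Finset.Ico t t₂, (a τ : ℤ)) ≤ (t₂ - t) + c) :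
    ∃ g : (Σ τ : ℤ, Fin (a τ)) → ℤ,
      Function.Injective g ∧
      (∀ p : Σ τ : ℤ, Fin (a τ), p.1 ≤ g p ∧ g p < t₂ + c) ∧
      (∀ (τ : ℤ) (h : 0 < a τ), g ⟨τ, ⟨0, h⟩⟩ = τ) := by
  refine stmt_6_general (e := t₂) (by lia) (fun τ hτ ↦ hout τ (by lia)) fun t ht ↦ ?_
  have t_mem : t₁ ≤ t ∧ t < t₂ := not_not.1 fun h ↦ by simp [hout t h] at ht
  rw [Int.card_Ico]
  zify
  linarith [hsum t t_mem.1 t_mem.2, Int.self_le_toNat (t₂ + c - t)]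
end

section
/- Let k ∈ ℕ, let μ : Fin k → ℝ satisfy 0 ≤ μ i ≤ 1 for all i, let μ̄ := ∑_i μ i, and let ε be a real number with 0 < ε ≤ 1/3. Then ∏_{i} (3ε·μ i + 1) ≤ (1 + 3ε)^{(1+3ε)·μ̄} · exp(−3ε²·μ̄). -/
/-!
Since `1 + y ≤ exp y`, the product is at most `exp (x * ∑ μ i)` with `x = 3 * ε`. The Padé bound
`2 * x / (x + 2) ≤ log (1 + x)` shows that `(1 + x) * log (1 + x)` exceeds `x` by at least
`x ^ 2 / (x + 2)`, which is at least `x ^ 2 / 3 = 3 * ε ^ 2` once `x ≤ 1`.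
-/

theorem add_sq_div_add_two_le_one_add_mul_log_one_add {x : ℝ} (hx : 0 ≤ x) :
    x + x ^ 2 / (x + 2) ≤ (1 + x) * Real.log (1 + x) :=
  calc
    x + x ^ 2 / (x + 2) = (1 + x) * (2 * x / (x + 2)) := by
      field_simp
      ring
    _ ≤ (1 + x) * Real.log (1 + x) := by
      gcongr
      exact Real.le_log_one_add_of_nonneg hx

theorem exp_mul_le_one_add_rpow_mul_exp_neg {x m : ℝ} (hx : 0 ≤ x) (hm : 0 ≤ m) :
    Real.exp (x * m) ≤ (1 + x) ^ ((1 + x) * m) * Real.exp (-(x ^ 2 / (x + 2)) * m) := by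
  have exponent_le : (x + x ^ 2 / (x + 2)) * m ≤ (1 + x) * Real.log (1 + x) * m :=
    mul_le_mul_of_nonneg_right (add_sq_div_add_two_le_one_add_mul_log_one_add hx) hm
  rw [Real.rpow_def_of_pos (by positivity), ← Real.exp_add, Real.exp_le_exp]
  linarith

section Product

variable {ι : Type*} [Fintype ι] {μ : ι → ℝ}

theorem prod_mul_add_one_le_one_add_rpow_mul_exp_neg {x : ℝ} (hx : 0 ≤ x)
    (hμ : ∀ i, 0 ≤ μ i) :
    ∏ i, (x * μ i + 1) ≤
      (1 + x) ^ ((1 + x) * ∑ i, μ i) * Real.exp (-(x ^ 2 / (x + 2)) * ∑ i, μ i) :=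
  calc
    ∏ i, (x * μ i + 1) = ∏ i, (1 + x * μ i) := by simp only [add_comm]
    _ ≤ Real.exp (∑ i, x * μ i) :=
      Real.prod_one_add_le_exp_sum Finset.univ fun i => mul_nonneg hx (hμ i)
    _ = Real.exp (x * ∑ i, μ i) := by rw [Finset.mul_sum]
    _ ≤ _ := exp_mul_le_one_add_rpow_mul_exp_neg hx (Fintype.sum_nonneg hμ)

theorem stmt_7_general {ε : ℝ} (hε : 0 ≤ ε) (hε' : ε ≤ 1 / 3) (hμ : ∀ i, 0 ≤ μ i) :
    ∏ i, (3 * ε * μ i + 1) ≤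
      (1 + 3 * ε) ^ ((1 + 3 * ε) * ∑ i, μ i) * Real.exp (-3 * ε ^ 2 * ∑ i, μ i) := by
  have sum_nonneg : 0 ≤ ∑ i, μ i := Fintype.sum_nonneg hμ
  have rate_le : -((3 * ε) ^ 2 / (3 * ε + 2)) ≤ -3 * ε ^ 2 :=
    calc
      -((3 * ε) ^ 2 / (3 * ε + 2)) ≤ -((3 * ε) ^ 2 / 3) := by
        gcongr
        linarith
      _ = -3 * ε ^ 2 := by ring
  refine (prod_mul_add_one_le_one_add_rpow_mul_exp_neg (by positivity) hμ).trans ?_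
  gcongr

end Product

theorem stmt_7 (k : ℕ) (μ : Fin k → ℝ) (hμ : ∀ i, 0 ≤ μ i ∧ μ i ≤ 1)
    (ε : ℝ) (hε : 0 < ε) (hε' : ε ≤ 1 / 3) :
    ∏ i, (3 * ε * μ i + 1) ≤
      (1 + 3 * ε) ^ ((1 + 3 * ε) * ∑ i, μ i) * Real.exp (-3 * ε ^ 2 * ∑ i, μ i) :=
  stmt_7_general hε.le hε' fun i => (hμ i).1
end

section
/- For all real numbers a, b₁, b₂ ≥ 0: max( a + (2/e)·b₁ + (3/(2e))·b₂ , (1 − 1/e)·a + (1 − 1/(2e))·b₁ + b₂ ) ≥ (1/2 + 3/(4e))·(a + b₁ + b₂). -/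
/-!
The maximum dominates the average of the two guarantees. In that average the coefficients of `b₁`
and `b₂` both equal `1 / 2 + 3 / (4 * e)`, and the coefficient of `a` is `1 - 1 / (2 * e)`, which is
at least as large exactly when `5 / 2 ≤ e`.
-/

section

variable {K : Type*} [Field K]

theorem guarantee_add_guarantee [CharZero K] (c a b₁ b₂ : K) :
    (a + (2 / c) * b₁ + (3 / (2 * c)) * b₂) +
        ((1 - 1 / c) * a + (1 - 1 / (2 * c)) * b₁ + b₂) =
      2 * ((1 / 2 + 3 / (4 * c)) * (a + b₁ + b₂)) + (1 - 5 / 2 / c) * a := by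
  ring

variable [LinearOrder K] [IsStrictOrderedRing K]

theorem stmt_9_general {c a : K} (hc : 5 / 2 ≤ c) (ha : 0 ≤ a) (b₁ b₂ : K) :
    max (a + (2 / c) * b₁ + (3 / (2 * c)) * b₂)
        ((1 - 1 / c) * a + (1 - 1 / (2 * c)) * b₁ + b₂) ≥
      (1 / 2 + 3 / (4 * c)) * (a + b₁ + b₂) := by
  have c_nonneg : 0 ≤ c := le_trans (by norm_num) hc
  have surplus_nonneg : 0 ≤ (1 - 5 / 2 / c) * a :=
    mul_nonneg (sub_nonneg.2 (div_le_one_of_le₀ hc c_nonneg)) ha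
  apply le_max_of_two_nsmul_le_add
  rw [guarantee_add_guarantee, two_nsmul, ← two_mul]
  exact le_add_of_nonneg_right surplus_nonneg

end

theorem stmt_9 (a b₁ b₂ : ℝ) (ha : 0 ≤ a) (hb₁ : 0 ≤ b₁) (hb₂ : 0 ≤ b₂) :
    max (a + (2 / Real.exp 1) * b₁ + (3 / (2 * Real.exp 1)) * b₂)
        ((1 - 1 / Real.exp 1) * a + (1 - 1 / (2 * Real.exp 1)) * b₁ + b₂) ≥
      (1 / 2 + 3 / (4 * Real.exp 1)) * (a + b₁ + b₂) :=
  stmt_9_general (by linarith [Real.exp_one_gt_d9]) ha b₁ b₂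
end

section
/- Let T ∈ ℕ and let a : ℕ → ℕ satisfy a τ = 0 for τ = 0 and for τ > T. Define D := max over all pairs 1 ≤ t₁ ≤ t₂ ≤ T of max( ∑_{τ = t₁}^{t₂} a τ − (t₂ − t₁ + 1), 0 ). Then there exists an injective function s from the set of pairs {(τ, i) : 1 ≤ τ ≤ T, i ∈ Fin (a τ)} into ℕ such that τ ≤ s(τ, i) ≤ τ + D for every such pair. -/
/-!
Serve batch `n` in consecutive slots starting at `fifoStart a n`, the maximum over `t ≤ n` of
`t + ∑ τ ∈ Ico t n, a τ`: this is when a first-in-first-out server becomes free for batch `n`, the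
maximum being attained at the start `t` of the busy period running at time `n` (the Reich formula).
The term `t = n` gives `n ≤ fifoStart a n`, distinct batches occupy disjoint blocks of slots, and
the block of batch `n` ends by time `n + D` because the load of each interval `[t, n]` exceeds its
length by at most `D`.
-/

open Finset

/-- The first service slot of the transmissions placed at time `n` by the tentative schedule `a`,
under first-in-first-out service of one transmission per time step. -/
def fifoStart (a : ℕ → ℕ) (n : ℕ) : ℕ :=
  (Iic n).sup fun t => t + ∑ τ ∈ Ico t n, a τ

/-- The first-in-first-out service time of the `i`-th transmission placed at time `τ`. The
lexicographic order on the pairs `(τ, i)` is the order of arrival. -/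
def fifoSlot (a : ℕ → ℕ) (p : Σₗ τ : ℕ, Fin (a τ)) : ℕ :=
  fifoStart a p.1 + p.2

section Fifo

variable {a : ℕ → ℕ}

theorem add_sum_Ico_le_fifoStart {t n : ℕ} (ht : t ≤ n) :
    t + ∑ τ ∈ Ico t n, a τ ≤ fifoStart a n :=
  le_sup (f := fun t => t + ∑ τ ∈ Ico t n, a τ) (mem_Iic.2 ht)

theorem le_fifoStart (n : ℕ) : n ≤ fifoStart a n := by
  simpa using add_sum_Ico_le_fifoStart (a := a) (le_refl n)

theorem fifoStart_add_le {n k : ℕ} (h : ∀ t ≤ n, t + ∑ τ ∈ Icc t n, a τ ≤ k) :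
    fifoStart a n + a n ≤ k := by
  obtain ⟨t, ht, hstart⟩ :=
    exists_mem_eq_sup (Iic n) nonempty_Iic fun t => t + ∑ τ ∈ Ico t n, a τ
  have htn : t ≤ n := mem_Iic.1 ht
  calc fifoStart a n + a n
      = t + (∑ τ ∈ Ico t n, a τ + a n) := by rw [fifoStart, hstart, add_assoc]
    _ = t + ∑ τ ∈ Icc t n, a τ := by rw [sum_Ico_add_eq_sum_Icc htn]
    _ ≤ k := h t htn

theorem fifoStart_add_le_fifoStart {m n : ℕ} (hmn : m < n) :
    fifoStart a m + a m ≤ fifoStart a n := by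
  refine fifoStart_add_le fun t ht => ?_
  calc t + ∑ τ ∈ Icc t m, a τ
      ≤ t + ∑ τ ∈ Ico t n, a τ := by gcongr; exact Icc_subset_Ico_right hmn
    _ ≤ fifoStart a n := add_sum_Ico_le_fifoStart (ht.trans hmn.le)

theorem fifoSlot_strictMono : StrictMono (fifoSlot a) := by
  rintro _ _ (⟨i, j, hmn⟩ | ⟨i, j, hij⟩)
  · exact (Nat.add_lt_add_left i.isLt _).trans_le
      ((fifoStart_add_le_fifoStart hmn).trans (Nat.le_add_right _ _))
  · exact Nat.add_lt_add_left hij _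

theorem le_fifoSlot (p : Σₗ τ : ℕ, Fin (a τ)) : p.1 ≤ fifoSlot a p :=
  (le_fifoStart p.1).trans (Nat.le_add_right _ _)

theorem fifoSlot_le {D : ℕ} (hD : ∀ t₁ t₂, ∑ τ ∈ Icc t₁ t₂, a τ ≤ #(Icc t₁ t₂) + D)
    (p : Σₗ τ : ℕ, Fin (a τ)) : fifoSlot a p ≤ p.1 + D := by
  have block_end : fifoStart a p.1 + a p.1 ≤ p.1 + 1 + D := by
    refine fifoStart_add_le fun t ht => ?_
    have := hD t p.1
    rw [Nat.card_Icc] at this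
    omega
  have : fifoSlot a p < fifoStart a p.1 + a p.1 := Nat.add_lt_add_left p.2.isLt _
  omega

end Fifo

theorem sum_Icc_le_card_add_sup_overflow {a : ℕ → ℕ} {l u : ℕ}
    (ha : ∀ τ ∉ Icc l u, a τ = 0) (t₁ t₂ : ℕ) :
    ∑ τ ∈ Icc t₁ t₂, a τ ≤ #(Icc t₁ t₂) +
      ((Icc l u ×ˢ Icc l u).filter fun p => p.1 ≤ p.2).sup
        fun p => (∑ τ ∈ Icc p.1 p.2, a τ) - (p.2 - p.1 + 1) := by
  have sum_truncate : ∑ τ ∈ Icc t₁ t₂, a τ = ∑ τ ∈ Icc (t₁ ⊔ l) (t₂ ⊓ u), a τ := by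
    refine (sum_subset (Icc_subset_Icc le_sup_left inf_le_left) fun τ hτ hτ' => ha τ ?_).symm
    simp only [mem_Icc] at hτ hτ' ⊢
    omega
  rcases lt_or_ge (t₂ ⊓ u) (t₁ ⊔ l) with hempty | hle
  · rw [sum_truncate, Icc_eq_empty_of_lt hempty, sum_empty]
    exact Nat.zero_le _
  · have mem_pairs : (t₁ ⊔ l, t₂ ⊓ u) ∈ (Icc l u ×ˢ Icc l u).filter fun p => p.1 ≤ p.2 := by
      simp only [mem_filter, mem_product, mem_Icc]
      omega
    have length_le : t₂ ⊓ u - (t₁ ⊔ l) + 1 ≤ #(Icc t₁ t₂) := by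
      rw [Nat.card_Icc]
      omega
    calc ∑ τ ∈ Icc t₁ t₂, a τ
        = ∑ τ ∈ Icc (t₁ ⊔ l) (t₂ ⊓ u), a τ := sum_truncate
      _ ≤ (t₂ ⊓ u - (t₁ ⊔ l) + 1) +
          (∑ τ ∈ Icc (t₁ ⊔ l) (t₂ ⊓ u), a τ - (t₂ ⊓ u - (t₁ ⊔ l) + 1)) := le_add_tsub
      _ ≤ _ := add_le_add length_le
          (le_sup (f := fun p : ℕ × ℕ => (∑ τ ∈ Icc p.1 p.2, a τ) - (p.2 - p.1 + 1)) mem_pairs)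

theorem stmt_11_general (a : ℕ → ℕ) (D : ℕ)
    (hD : ∀ t₁ t₂, ∑ τ ∈ Icc t₁ t₂, a τ ≤ #(Icc t₁ t₂) + D) :
    ∃ s : (Σ τ : ℕ, Fin (a τ)) → ℕ,
      Function.Injective s ∧
      ∀ p : Σ τ : ℕ, Fin (a τ), p.1 ≤ s p ∧ s p ≤ p.1 + D :=
  ⟨fun p => fifoSlot a (toLex p), fifoSlot_strictMono.injective.comp toLex.injective,
    fun p => ⟨le_fifoSlot (toLex p), fifoSlot_le hD (toLex p)⟩⟩

theorem stmt_11 (T : ℕ) (a : ℕ → ℕ) (h0 : a 0 = 0) (hT : ∀ τ, T < τ → a τ = 0)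
    (D : ℕ)
    (hD : D = Finset.sup ((Finset.Icc 1 T ×ˢ Finset.Icc 1 T).filter (fun p => p.1 ≤ p.2))
      (fun p => (∑ τ ∈ Finset.Icc p.1 p.2, a τ) - (p.2 - p.1 + 1))) :
    ∃ s : (Σ τ : ℕ, Fin (a τ)) → ℕ,
      Function.Injective s ∧
      ∀ p : Σ τ : ℕ, Fin (a τ), p.1 ≤ s p ∧ s p ≤ p.1 + D := by
  have a_eq_zero : ∀ τ ∉ Icc 1 T, a τ = 0 := by grind
  exact stmt_11_general a D (hD ▸ sum_Icc_le_card_add_sup_overflow a_eq_zero)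
end

section
/- Consider a broadcast scheduling instance and an integer L ≥ 1. Assume that for every page p, any two adjacent release times of requests for p differ by at most L − 1 (i.e., consecutive elements of T_p are less than L apart). Suppose σ is a schedule with maximum flow time at most L. Then for every time t ∈ ℕ, the number of pages p that are requested at least once and satisfy t ∈ W_p is at most 2L. -/
/-- Request `ρ` is completed at time `t` under schedule `σ`: `t` is after `ρ`'s release,
page `p_ρ` is transmitted at `t`, and at no earlier time after the release. -/
def CompletedAt {P R : Type*} (rel : R → ℕ) (page : R → P) (σ : ℕ → Option P)
    (ρ : R) (t : ℕ) : Prop :=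
  rel ρ < t ∧ σ t = some (page ρ) ∧ ∀ t', rel ρ < t' → t' < t → σ t' ≠ some (page ρ)

/-- Schedule `σ` has maximum flow time at most `L`. -/
def MaxFlowLE {P R : Type*} (rel : R → ℕ) (page : R → P) (σ : ℕ → Option P) (L : ℕ) : Prop :=
  ∀ ρ, ∃ t, rel ρ + 1 ≤ t ∧ t ≤ rel ρ + L ∧ CompletedAt rel page σ ρ t

/-- `T_p`: the set of release times of requests for page `p`. -/
def RelTimes {P R : Type*} (rel : R → ℕ) (page : R → P) (p : P) : Set ℕ :=
  {r | ∃ ρ, page ρ = p ∧ rel ρ = r}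

/-- `W_p = [min T_p + 1, max T_p + L]`: the window of page `p`. -/
def Window {P R : Type*} (rel : R → ℕ) (page : R → P) (L : ℕ) (p : P) : Set ℕ :=
  Set.Icc (sInf (RelTimes rel page p) + 1) (sSup (RelTimes rel page p) + L)

/-!
A page whose window contains `t` is released before `t` and has a release no earlier than `t - L`.
As adjacent releases are at most `L` apart, the last release `r` before `t` then satisfies
`t - L ≤ r < t`, so the page is transmitted in `[r + 1, r + L]` and hence strictly between `t - L`
and `t + L`. There are only `2L - 1` such times, and at most one page is transmitted at each.
-/

/-- Adjacent elements of `T` differ by at most `d`: the density condition on release times, written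
additively to avoid truncated subtraction. -/
def GapsLE (T : Set ℕ) (d : ℕ) : Prop :=
  ∀ r ∈ T, ∀ r' ∈ T, r < r' → (∀ x ∈ T, ¬(r < x ∧ x < r')) → r' ≤ r + d

theorem GapsLE.exists_mem_lt_and_le_add {T : Set ℕ} {d t a b : ℕ} (hT : GapsLE T d)
    (ha : a ∈ T) (hat : a < t) (hb : b ∈ T) (htb : t ≤ b + d) :
    ∃ r ∈ T, r < t ∧ t ≤ r + d := by
  obtain ⟨r, ⟨hr, hrt : r < t⟩, hr_max⟩ : ∃ r, IsGreatest (T ∩ Set.Iio t) r :=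
    (bddAbove_Iio.mono Set.inter_subset_right).exists_isGreatest_of_nonempty ⟨a, ha, hat⟩
  refine ⟨r, hr, hrt, ?_⟩
  rcases lt_or_ge b t with hbt | hbt
  · have hbr : b ≤ r := hr_max ⟨hb, hbt⟩
    omega
  · obtain ⟨r', ⟨hr', htr' : t ≤ r'⟩, hr'_min⟩ : ∃ r', IsLeast (T ∩ Set.Ici t) r' :=
      (OrderBot.bddBelow _).exists_isLeast_of_nonempty ⟨b, hb, hbt⟩
    have h_adjacent : ∀ x ∈ T, ¬(r < x ∧ x < r') := by
      rintro x hx ⟨hrx, hxr'⟩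
      rcases lt_or_ge x t with hxt | hxt
      · exact hrx.not_ge (hr_max ⟨hx, hxt⟩)
      · exact hxr'.not_ge (hr'_min ⟨hx, hxt⟩)
    exact htr'.trans (hT r hr r' hr' (hrt.trans_le htr') h_adjacent)

theorem encard_setOf_exists_eq_some_le {ι P : Type*} (σ : ι → Option P) (S : Set ι) :
    {p | ∃ s ∈ S, σ s = some p}.encard ≤ S.encard := by
  have h_image : some '' {p | ∃ s ∈ S, σ s = some p} ⊆ σ '' S := by
    rintro _ ⟨p, ⟨s, hs, hsp⟩, rfl⟩
    exact ⟨s, hs, hsp⟩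
  calc {p | ∃ s ∈ S, σ s = some p}.encard
      = (some '' {p | ∃ s ∈ S, σ s = some p}).encard :=
        ((Option.some_injective P).encard_image _).symm
    _ ≤ (σ '' S).encard := Set.encard_le_encard h_image
    _ ≤ S.encard := Set.encard_image_le σ S

theorem encard_setOf_lt_add_and_lt_add_le (t L : ℕ) :
    {s : ℕ | t < s + L ∧ s < t + L}.encard ≤ (2 * L - 1 : ℕ) := by
  have h_Ico : {s : ℕ | t < s + L ∧ s < t + L} = Finset.Ico (t + 1 - L) (t + L) := by
    ext s
    simp only [Set.mem_ofPred_eq, Finset.coe_Ico, Set.mem_Ico]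
    omega
  rw [h_Ico, Set.encard_coe_eq_coe_finsetCard, Nat.card_Ico, Nat.cast_le]
  omega

section Broadcast

variable {P R : Type*} {rel : R → ℕ} {page : R → P} {L t : ℕ} {p : P}

theorem relTimes_finite [Finite R] (rel : R → ℕ) (page : R → P) (p : P) :
    (RelTimes rel page p).Finite :=
  (Set.finite_range rel).subset fun _ ⟨ρ, _, hρ⟩ => ⟨ρ, hρ⟩

theorem MaxFlowLE.exists_transmission {σ : ℕ → Option P} (hσ : MaxFlowLE rel page σ L) {r : ℕ}
    (hr : r ∈ RelTimes rel page p) : ∃ s, r < s ∧ s ≤ r + L ∧ σ s = some p := by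
  obtain ⟨ρ, rfl, rfl⟩ := hr
  obtain ⟨s, hrs, hsr, -, hs, -⟩ := hσ ρ
  exact ⟨s, hrs, hsr, hs⟩

theorem exists_relTime_of_mem_window (hp : ∃ ρ, page ρ = p)
    (hbdd : BddAbove (RelTimes rel page p)) (hgap : GapsLE (RelTimes rel page p) L)
    (ht : t ∈ Window rel page L p) : ∃ r ∈ RelTimes rel page p, r < t ∧ t ≤ r + L := by
  have hne : (RelTimes rel page p).Nonempty := hp.elim fun ρ hρ => ⟨rel ρ, ρ, hρ, rfl⟩
  exact hgap.exists_mem_lt_and_le_add (Nat.sInf_mem hne) ht.1 (Nat.sSup_mem hne hbdd) ht.2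

end Broadcast

theorem stmt_12_general {P R : Type*} (rel : R → ℕ) (page : R → P) (L : ℕ)
    (hbdd : ∀ p, BddAbove (RelTimes rel page p)) (hgap : ∀ p, GapsLE (RelTimes rel page p) L)
    (σ : ℕ → Option P) (hσ : MaxFlowLE rel page σ L) (t : ℕ) :
    {p : P | (∃ ρ, page ρ = p) ∧ t ∈ Window rel page L p}.encard ≤ (2 * L - 1 : ℕ) := by
  have h_transmitted : {p : P | (∃ ρ, page ρ = p) ∧ t ∈ Window rel page L p} ⊆
      {p | ∃ s ∈ {s : ℕ | t < s + L ∧ s < t + L}, σ s = some p} := by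
    rintro p ⟨hp, ht⟩
    obtain ⟨r, hr, hrt, htr⟩ := exists_relTime_of_mem_window hp (hbdd p) (hgap p) ht
    obtain ⟨s, hrs, hsr, hs⟩ := hσ.exists_transmission hr
    exact ⟨s, ⟨by omega, by omega⟩, hs⟩
  exact (Set.encard_le_encard h_transmitted).trans <|
    (encard_setOf_exists_eq_some_le σ _).trans (encard_setOf_lt_add_and_lt_add_le t L)

theorem stmt_12 {P R : Type*} [Fintype P] [Fintype R]
    (rel : R → ℕ) (page : R → P) (L : ℕ) (hL : 1 ≤ L)
    (hadj : ∀ (p : P) (r r' : ℕ), r ∈ RelTimes rel page p → r' ∈ RelTimes rel page p →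
      r < r' → (∀ r'', r'' ∈ RelTimes rel page p → ¬(r < r'' ∧ r'' < r')) → r' - r ≤ L - 1)
    (σ : ℕ → Option P) (hσ : MaxFlowLE rel page σ L) (t : ℕ) :
    {p : P | (∃ ρ, page ρ = p) ∧ t ∈ Window rel page L p}.ncard ≤ 2 * L := by
  have hgap (p : P) : GapsLE (RelTimes rel page p) L := fun r hr r' hr' hlt h_adjacent => by
    have := hadj p r r' hr hr' hlt h_adjacent
    omega
  have h_card := stmt_12_general rel page L (fun p => (relTimes_finite rel page p).bddAbove)
    hgap σ hσ t
  exact (ENat.toNat_le_of_le_natCast h_card).trans (Nat.sub_le _ _)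
end

section
/- Consider a broadcast scheduling instance and an integer L ≥ 1. Assume that for every page p, any two adjacent release times of requests for p differ by at most L − 1 (i.e., consecutive elements of T_p are less than L apart). Suppose there exists a schedule with maximum flow time at most L. Then the set of pages that are requested at least once can be partitioned into at most 2L groups such that for any two distinct pages p ≠ q in the same group, the windows W_p and W_q are disjoint; i.e., there is a coloring c of these pages with values in Fin (2L) such that c p = c q and p ≠ q implies W_p ∩ W_q = ∅. -/
/-!
If `p` is requested and `t ∈ W_p`, then the last release time `r < t` of `p` satisfies `t ≤ r + L`:
either `r = max T_p`, or the next release time is at least `t` and at most `r + L`. The request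
released at `r` is served in `[r + 1, r + L] ⊆ [t + 1 - L, t + L - 1]`. These are at most `2L - 1`
slots, each serving one page, so at most `2L - 1` windows contain `t`. An interval graph whose
intervals cover each point at most `k` times is `k`-colorable: among finitely many intervals, the
one with the largest left endpoint `x` meets only intervals containing `x`, that is at most `k - 1`
others, so it can be colored last. Compactness extends this to infinitely many intervals.
-/

section Coloring

variable {V : Type*} {G : SimpleGraph V} {k : ℕ}

theorem colorable_induce_insert {s : Set V} {v : V} (hs : (G.induce s).Colorable k)
    (hv : (G.neighborSet v ∩ s).encard < k) : (G.induce (insert v s)).Colorable k := by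
  classical
  obtain ⟨C⟩ := hs
  let usedColors : Set (Fin k) := C '' (Subtype.val ⁻¹' G.neighborSet v)
  have usedColors_encard_lt : usedColors.encard < (Set.univ : Set (Fin k)).encard := calc
    usedColors.encard ≤ (Subtype.val ⁻¹' G.neighborSet v : Set s).encard := Set.encard_image_le _ _
    _ = (G.neighborSet v ∩ s).encard := by
      rw [← Subtype.val_injective.encard_image, Subtype.image_preimage_coe, Set.inter_comm]
    _ < (Set.univ : Set (Fin k)).encard := by simpa using hv
  obtain ⟨a, ha⟩ : ∃ a, a ∉ usedColors := (Set.ne_univ_iff_exists_notMem _).mp fun h ↦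
    usedColors_encard_lt.ne (congrArg Set.encard h)
  have ne_of_adj (w : s) (hw : G.Adj v w) : a ≠ C w := fun h ↦ ha ⟨w, hw, h.symm⟩
  refine ⟨SimpleGraph.Coloring.mk
    (fun w ↦ if hw : w.1 = v then a else C ⟨w, w.2.resolve_left hw⟩) fun {x y} hxy ↦ ?_⟩
  have hxy : G.Adj x y := hxy
  by_cases hx : x.1 = v <;> by_cases hy : y.1 = v
  · exact absurd (hx.trans hy.symm) hxy.ne
  · simpa only [hx, hy, dite_true, dite_false] using
      ne_of_adj ⟨y, y.2.resolve_left hy⟩ (by rwa [hx] at hxy)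
  · simpa only [hx, hy, dite_true, dite_false] using
      (ne_of_adj ⟨x, x.2.resolve_left hx⟩ (by rwa [hy, G.adj_comm] at hxy)).symm
  · simpa only [hx, hy, dite_false] using C.valid (v := ⟨x, _⟩) (w := ⟨y, _⟩) hxy

theorem colorable_of_forall_finset_colorable_induce
    (h : ∀ s : Finset V, (G.induce (s : Set V)).Colorable k) : G.Colorable k := by
  refine SimpleGraph.nonempty_hom_of_forall_finite_subgraph_hom fun G' hG' ↦ ?_
  have hC : (G.induce G'.verts).Colorable k := by
    have hC := h hG'.toFinset
    rwa [hG'.coe_toFinset] at hC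
  exact hC.some.comp ⟨id, fun hvw ↦ G'.adj_sub hvw⟩

theorem colorable_of_forall_finset_exists_encard_neighborSet_inter_lt
    (h : ∀ s : Finset V, s.Nonempty → ∃ v ∈ s, (G.neighborSet v ∩ s).encard < k) :
    G.Colorable k := by
  classical
  refine colorable_of_forall_finset_colorable_induce fun s ↦ ?_
  induction s using Finset.strongInduction with
  | H s ih =>
    obtain rfl | hs := s.eq_empty_or_nonempty
    · rw [Finset.coe_empty]
      exact .of_isEmpty k
    · obtain ⟨v, hv, hvk⟩ := h s hs
      have erase_subset : (s.erase v : Set V) ⊆ s := mod_cast s.erase_subset v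
      rw [← Finset.insert_erase hv, Finset.coe_insert]
      exact colorable_induce_insert (ih _ (Finset.erase_ssubset hv))
        ((Set.encard_le_encard (Set.inter_subset_inter_right _ erase_subset)).trans_lt hvk)

end Coloring

section IntersectionGraph

variable {ι α : Type*}

/-- The intersection graph of a family of sets: distinct indices are adjacent when their sets meet.
A proper coloring of it is a partition of the family into classes of pairwise disjoint sets. -/
def intersectionGraph (s : ι → Set α) : SimpleGraph ι where
  Adj i j := i ≠ j ∧ ¬Disjoint (s i) (s j)
  symm := ⟨fun _ _ h ↦ ⟨h.1.symm, fun hd ↦ h.2 hd.symm⟩⟩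
  loopless := ⟨fun _ h ↦ h.1 rfl⟩

theorem intersectionGraph_Icc_colorable [LinearOrder α] {a b : ι → α} (hab : ∀ i, a i ≤ b i) {k : ℕ}
    (hk : ∀ t, {i | t ∈ Set.Icc (a i) (b i)}.encard ≤ k) :
    (intersectionGraph fun i ↦ Set.Icc (a i) (b i)).Colorable k := by
  refine colorable_of_forall_finset_exists_encard_neighborSet_inter_lt fun s hs ↦ ?_
  obtain ⟨v, hv, hmax⟩ := s.exists_max_image a hs
  let cover : Set ι := {i | a v ∈ Set.Icc (a i) (b i)}
  have v_mem_cover : v ∈ cover := ⟨le_rfl, hab v⟩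
  have neighbors_subset : (intersectionGraph fun i ↦ Set.Icc (a i) (b i)).neighborSet v ∩ s ⊆
      cover \ {v} := by
    rintro i ⟨⟨hvi, hmeet⟩, his⟩
    obtain ⟨t, htv, hti⟩ := Set.not_disjoint_iff.mp hmeet
    exact ⟨⟨hmax i his, htv.1.trans hti.2⟩, hvi.symm⟩
  refine ⟨v, hv, (Set.encard_le_encard neighbors_subset).trans_lt ?_⟩
  have cover_encard_le : (cover \ {v}).encard + 1 ≤ k := by
    rw [Set.encard_sdiff_singleton_add_one v_mem_cover]
    exact hk (a v)
  exact (ENat.add_one_le_iff (ne_top_of_le_ne_top (ENat.natCast_ne_top k)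
    (le_self_add.trans cover_encard_le))).mp cover_encard_le

end IntersectionGraph

/-- Any two consecutive elements of `T` differ by at most `L`; for a set of release times, this says
that the intervals `[r + 1, r + L]` in which its requests must be served leave no gap. -/
def AdjacentGapsLE (T : Set ℕ) (L : ℕ) : Prop :=
  ∀ r r', r ∈ T → r' ∈ T → r < r' → (∀ r'', r'' ∈ T → ¬(r < r'' ∧ r'' < r')) → r' ≤ r + L

theorem AdjacentGapsLE.exists_mem_lt_le_add {T : Set ℕ} {L t : ℕ} (hT : AdjacentGapsLE T L)
    (hne : T.Nonempty) (hbdd : BddAbove T) (ht : t ∈ Set.Icc (sInf T + 1) (sSup T + L)) :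
    ∃ r ∈ T, r < t ∧ t ≤ r + L := by
  have bddAbove_before : BddAbove (T ∩ Set.Iio t) := hbdd.mono Set.inter_subset_left
  obtain ⟨hr, hrt⟩ := Nat.sSup_mem (s := T ∩ Set.Iio t) ⟨sInf T, Nat.sInf_mem hne, ht.1⟩
    bddAbove_before
  set r := sSup (T ∩ Set.Iio t)
  refine ⟨r, hr, hrt, ?_⟩
  have le_r (x : ℕ) (hx : x ∈ T) (hxt : x < t) : x ≤ r := le_csSup bddAbove_before ⟨hx, hxt⟩
  have sSup_mem : sSup T ∈ T := Nat.sSup_mem hne hbdd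
  obtain hlast | hlast := lt_or_ge (sSup T) t
  · exact ht.2.trans (Nat.add_le_add_right (le_r _ sSup_mem hlast) L)
  · obtain ⟨hr', htr'⟩ := Nat.sInf_mem (s := T ∩ Set.Ici t) ⟨sSup T, sSup_mem, hlast⟩
    refine le_trans htr' (hT r _ hr hr' (lt_of_lt_of_le hrt htr') fun x hx ⟨hrx, hxr'⟩ ↦ ?_)
    have hxt : x < t := not_le.mp fun htx ↦ Nat.notMem_of_lt_sInf hxr' ⟨hx, htx⟩
    exact (le_r x hx hxt).not_gt hrx

section Broadcast

variable {P R : Type*} {rel : R → ℕ} {page : R → P} {σ : ℕ → Option P} {L : ℕ}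

theorem encard_le_card_of_forall_exists_transmission {S : Set P} (slots : Finset ℕ)
    (h : ∀ p ∈ S, ∃ t ∈ slots, σ t = some p) : S.encard ≤ slots.card := calc
  S.encard = (some '' S).encard := ((Option.some_injective P).encard_image S).symm
  _ ≤ (σ '' slots).encard := Set.encard_le_encard (Set.image_subset_iff.mpr h)
  _ ≤ (slots : Set ℕ).encard := Set.encard_image_le _ _
  _ = slots.card := Set.encard_coe_eq_coe_finsetCard slots

theorem MaxFlowLE.one_le (hσ : MaxFlowLE rel page σ L) (ρ : R) : 1 ≤ L := by
  obtain ⟨t, hlt, hle, -⟩ := hσ ρ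
  omega

theorem MaxFlowLE.exists_transmission_near_of_mem_window (hσ : MaxFlowLE rel page σ L) {p : P}
    (hp : p ∈ Set.range page) (hbdd : BddAbove (RelTimes rel page p))
    (hgap : AdjacentGapsLE (RelTimes rel page p) L) {t : ℕ} (ht : t ∈ Window rel page L p) :
    ∃ s ∈ Finset.Ico (t + 1 - L) (t + L), σ s = some p := by
  obtain ⟨ρ₀, hρ₀⟩ := hp
  obtain ⟨_, ⟨ρ, rfl, rfl⟩, hlt, hle⟩ :=
    hgap.exists_mem_lt_le_add ⟨rel ρ₀, ρ₀, hρ₀, rfl⟩ hbdd ht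
  obtain ⟨s, hs, hsL, -, hserve, -⟩ := hσ ρ
  exact ⟨s, Finset.mem_Ico.mpr (by omega), hserve⟩

theorem MaxFlowLE.encard_setOf_mem_window_le (hσ : MaxFlowLE rel page σ L)
    (hbdd : ∀ p, BddAbove (RelTimes rel page p))
    (hgap : ∀ p, AdjacentGapsLE (RelTimes rel page p) L) (t : ℕ) :
    {p : Set.range page | t ∈ Window rel page L p}.encard ≤ (2 * L - 1 : ℕ) := by
  rw [← Subtype.val_injective.encard_image]
  refine (encard_le_card_of_forall_exists_transmission (σ := σ)
    (Finset.Ico (t + 1 - L) (t + L)) ?_).trans ?_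
  · rintro _ ⟨p, hp, rfl⟩
    exact hσ.exists_transmission_near_of_mem_window p.2 (hbdd p) (hgap p) hp
  · rw [Nat.card_Ico]
    exact_mod_cast (by omega : t + L - (t + 1 - L) ≤ 2 * L - 1)

theorem bddAbove_relTimes [Finite R] (p : P) : BddAbove (RelTimes rel page p) :=
  (Set.finite_range rel).bddAbove.mono (by rintro _ ⟨ρ, -, rfl⟩; exact ⟨ρ, rfl⟩)

theorem sInf_relTimes_add_one_le (hL : 1 ≤ L) {p : P} (hp : p ∈ Set.range page)
    (hbdd : BddAbove (RelTimes rel page p)) :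
    sInf (RelTimes rel page p) + 1 ≤ sSup (RelTimes rel page p) + L := by
  obtain ⟨ρ, hρ⟩ := hp
  have hmem : rel ρ ∈ RelTimes rel page p := ⟨ρ, hρ, rfl⟩
  exact add_le_add ((Nat.sInf_le hmem).trans (le_csSup hbdd hmem)) hL

theorem MaxFlowLE.intersectionGraph_window_colorable (hσ : MaxFlowLE rel page σ L)
    (hbdd : ∀ p, BddAbove (RelTimes rel page p))
    (hgap : ∀ p, AdjacentGapsLE (RelTimes rel page p) L) :
    (intersectionGraph fun p : Set.range page ↦ Window rel page L p).Colorable (2 * L - 1) :=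
  intersectionGraph_Icc_colorable (ι := Set.range page)
    (fun p ↦ sInf_relTimes_add_one_le (p.2.elim fun ρ _ ↦ hσ.one_le ρ) p.2 (hbdd p))
    (hσ.encard_setOf_mem_window_le hbdd hgap)

end Broadcast

theorem stmt_13_general {P R : Type*} (rel : R → ℕ) (page : R → P) (L : ℕ) (hL : 1 ≤ L)
    (hbdd : ∀ p, BddAbove (RelTimes rel page p))
    (hgap : ∀ p, AdjacentGapsLE (RelTimes rel page p) L)
    (hσ : ∃ σ : ℕ → Option P, MaxFlowLE rel page σ L) :
    ∃ c : P → Fin (2 * L - 1), ∀ p q : P, (∃ ρ, page ρ = p) → (∃ ρ, page ρ = q) →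
      p ≠ q → c p = c q → Window rel page L p ∩ Window rel page L q = ∅ := by
  obtain ⟨σ, hσ⟩ := hσ
  obtain ⟨C⟩ := hσ.intersectionGraph_window_colorable hbdd hgap
  have : Nonempty (Fin (2 * L - 1)) := ⟨⟨0, by omega⟩⟩
  obtain ⟨c, hc⟩ := Subtype.val_injective.surjective_comp_right C
  refine ⟨c, fun p q hp hq hpq hcpq ↦ Set.disjoint_iff_inter_eq_empty.mp ?_⟩
  by_contra hmeet
  refine C.valid (v := ⟨p, hp⟩) (w := ⟨q, hq⟩) ⟨fun h ↦ hpq (congrArg Subtype.val h), hmeet⟩ ?_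
  simpa only [← hc, Function.comp_apply] using hcpq

theorem stmt_13 {P R : Type*} [Fintype P] [Fintype R]
    (rel : R → ℕ) (page : R → P) (L : ℕ) (hL : 1 ≤ L)
    (hadj : ∀ (p : P) (r r' : ℕ), r ∈ RelTimes rel page p → r' ∈ RelTimes rel page p →
      r < r' → (∀ r'', r'' ∈ RelTimes rel page p → ¬(r < r'' ∧ r'' < r')) → r' - r ≤ L - 1)
    (hσ : ∃ σ : ℕ → Option P, MaxFlowLE rel page σ L) :
    ∃ c : P → Fin (2 * L), ∀ p q : P, (∃ ρ, page ρ = p) → (∃ ρ, page ρ = q) →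
      p ≠ q → c p = c q → Window rel page L p ∩ Window rel page L q = ∅ := by
  have hgap (p : P) : AdjacentGapsLE (RelTimes rel page p) L := fun r r' hr hr' hlt hadjacent ↦
    have : r' - r ≤ L - 1 := hadj p r r' hr hr' hlt hadjacent
    by omega
  obtain ⟨c, hc⟩ := stmt_13_general rel page L hL bddAbove_relTimes hgap hσ
  exact ⟨fun p ↦ (c p).castLE (Nat.sub_le _ _), fun p q hp hq hpq h ↦
    hc p q hp hq hpq (Fin.castLE_injective _ h)⟩
end

section
/- Consider a broadcast scheduling instance, an integer L ≥ 1, and an integer s with 1 ≤ s. Suppose there exists a schedule σ with maximum flow time at most L. Then there exists a batch schedule σ' with capacity s such that σ' t = ∅ whenever s does not divide t, and such that every request ρ is completed under σ' at some time t with s·⌈r_ρ/s⌉ < t ≤ s·⌈r_ρ/s⌉ + L + 2s. -/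
/-!
Cut time into blocks of length `s` and retransmit, as a single batch two blocks later, everything
that `σ` transmits during a block. A block has `s` time steps, so a batch has at most `s` pages, and
a transmission is delayed by at most `2 * s`. A delay of one block would not suffice: a request
released after the start of a block and served by `σ` within it has its release time rounded up to
the end of that block, and the batch has to come strictly later.
-/

/-- The time at which a transmission made at time `u` is repeated in a batch: the start of the
second block after the one containing `u`, where time is cut into the blocks
`[k * s, (k + 1) * s)`. -/
def batchTime (s u : ℕ) : ℕ := s * (u / s + 2)

/-- The batch schedule that repeats, at each multiple `t` of `s`, the pages which `σ` transmits
during the block `[t - 2 * s, t - s)`. At `t = 0` and `t = s` this block is empty, because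
subtraction is truncated. -/
def batchSchedule {P : Type*} [DecidableEq P] (s : ℕ) (σ : ℕ → Option P) (t : ℕ) : Finset P :=
  if s ∣ t then ((Finset.Ico (t - 2 * s) (t - s)).image σ).eraseNone else ∅

section batchTime

variable {r s u : ℕ}

theorem dvd_batchTime (s u : ℕ) : s ∣ batchTime s u :=
  Nat.dvd_mul_right s _

theorem batchTime_le_add_two_mul (s u : ℕ) : batchTime s u ≤ u + 2 * s := by
  have block_start_le : s * (u / s) ≤ u := Nat.mul_div_le u s
  rw [batchTime, mul_add]
  omega

theorem mem_Ico_batchTime_sub (hs : 0 < s) :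
    u ∈ Finset.Ico (batchTime s u - 2 * s) (batchTime s u - s) := by
  have block_start_le : s * (u / s) ≤ u := Nat.mul_div_le u s
  have lt_block_end : u < s * (u / s) + s := Nat.lt_mul_div_self_add hs
  rw [batchTime, mul_add, Finset.mem_Ico]
  omega

theorem mul_ceilDiv_lt_batchTime (hs : 0 < s) (hru : r ≤ u) :
    s * (r ⌈/⌉ s) < batchTime s u := by
  have le_block_end : r ≤ s * (u / s + 1) := hru.trans (Nat.lt_mul_div_succ u hs).le
  have ceil_le : r ⌈/⌉ s ≤ u / s + 1 := (ceilDiv_le_iff_le_mul hs).2 le_block_end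
  exact Nat.mul_lt_mul_of_pos_left (Nat.lt_succ_of_le ceil_le) hs

end batchTime

section batchSchedule

variable {P : Type*} [DecidableEq P] {s t u : ℕ} {p : P}

theorem batchSchedule_of_not_dvd (σ : ℕ → Option P) (hst : ¬ s ∣ t) : batchSchedule s σ t = ∅ :=
  if_neg hst

theorem card_batchSchedule_le (s : ℕ) (σ : ℕ → Option P) (t : ℕ) :
    (batchSchedule s σ t).card ≤ s := by
  by_cases hst : s ∣ t
  · rw [batchSchedule, if_pos hst]
    calc (((Finset.Ico (t - 2 * s) (t - s)).image σ).eraseNone).card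
        ≤ ((Finset.Ico (t - 2 * s) (t - s)).image σ).card := Finset.card_eraseNone_le _
      _ ≤ (Finset.Ico (t - 2 * s) (t - s)).card := Finset.card_image_le
      _ = t - s - (t - 2 * s) := Nat.card_Ico _ _
      _ ≤ s := by omega
  · simp [batchSchedule_of_not_dvd σ hst]

theorem mem_batchSchedule_batchTime {σ : ℕ → Option P} (hs : 0 < s) (hσ : σ u = some p) :
    p ∈ batchSchedule s σ (batchTime s u) := by
  rw [batchSchedule, if_pos (dvd_batchTime s u), Finset.mem_eraseNone, ← hσ]
  exact Finset.mem_image_of_mem σ (mem_Ico_batchTime_sub hs)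

end batchSchedule

theorem stmt_15_general {P R : Type*} (rel : R → ℕ) (page : R → P) (L s : ℕ) (hs : 1 ≤ s)
    (h : ∃ σ : ℕ → Option P, MaxFlowLE rel page σ L) :
    ∃ σ' : ℕ → Finset P,
      (∀ t, (σ' t).card ≤ s) ∧
      (∀ t, ¬ s ∣ t → σ' t = ∅) ∧
      ∀ ρ, ∃ t, rel ρ < t ∧ page ρ ∈ σ' t ∧
        s * (rel ρ ⌈/⌉ s) < t ∧ t ≤ s * (rel ρ ⌈/⌉ s) + L + 2 * s := by
  classical
  obtain ⟨σ, hσ⟩ := h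
  refine ⟨batchSchedule s σ, card_batchSchedule_le s σ, fun _ ↦ batchSchedule_of_not_dvd σ, ?_⟩
  intro ρ
  obtain ⟨u, -, u_le, rel_lt, σ_u, -⟩ := hσ ρ
  have rel_le : rel ρ ≤ s * (rel ρ ⌈/⌉ s) := (ceilDiv_le_iff_le_mul hs).1 le_rfl
  have ceil_lt : s * (rel ρ ⌈/⌉ s) < batchTime s u := mul_ceilDiv_lt_batchTime hs rel_lt.le
  refine ⟨batchTime s u, rel_le.trans_lt ceil_lt, mem_batchSchedule_batchTime hs σ_u, ceil_lt, ?_⟩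
  calc batchTime s u ≤ u + 2 * s := batchTime_le_add_two_mul s u
    _ ≤ rel ρ + L + 2 * s := by gcongr
    _ ≤ s * (rel ρ ⌈/⌉ s) + L + 2 * s := by gcongr

theorem stmt_15 {P R : Type*} [Fintype R]
    (rel : R → ℕ) (page : R → P) (L s : ℕ) (hL : 1 ≤ L) (hs : 1 ≤ s)
    (h : ∃ σ : ℕ → Option P, MaxFlowLE rel page σ L) :
    ∃ σ' : ℕ → Finset P,
      (∀ t, (σ' t).card ≤ s) ∧
      (∀ t, ¬ s ∣ t → σ' t = ∅) ∧
      ∀ ρ, ∃ t, rel ρ < t ∧ page ρ ∈ σ' t ∧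
        s * ((rel ρ + s - 1) / s) < t ∧ t ≤ s * ((rel ρ + s - 1) / s) + L + 2 * s :=
  stmt_15_general rel page L s hs h
end

section
/- Consider a broadcast scheduling instance and an integer s ≥ 1. Let σ' be a batch schedule with capacity s such that σ' t = ∅ whenever s does not divide t. Then there exists a schedule σ : ℕ → Option P (one page per time step) such that for every request ρ and every time C' with C' > s·⌈r_ρ/s⌉ and p_ρ ∈ σ' C', the request ρ is completed under σ at some time t' with r_ρ < t' ≤ r_ρ + (C' − s·⌈r_ρ/s⌉) + 2s. -/
/-!
A batch sent at a multiple `T` of `s` has at most `s` pages, so it can be sent one page at a time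
during the block `[T, T + s)`. This delays a transmission by at most `s - 1`, and rounding a release
time up to a multiple of `s` also moves it by at most `s - 1`.
-/

section

variable {P R : Type*} {rel : R → ℕ} {page : R → P} {s C : ℕ} {σ' : ℕ → Finset P} {ρ : R}

/-- The one-page-per-step schedule that replays a batch schedule: the pages of the batch at a
multiple `T` of `s` are sent in the arbitrary order of `Finset.toList` at times `T, T + 1, …`.
Pages of the batch beyond the first `s` are dropped, and so are batches at other times. -/
noncomputable def serialize (s : ℕ) (σ' : ℕ → Finset P) (t : ℕ) : Option P :=
  (σ' (s * (t / s))).toList[t % s]?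

theorem serialize_mul_add {i : ℕ} (hi : i < s) (k : ℕ) :
    serialize s σ' (s * k + i) = (σ' (s * k)).toList[i]? := by
  rw [serialize, Nat.mul_add_div (Nat.zero_lt_of_lt hi), Nat.div_eq_of_lt hi, Nat.add_zero,
    Nat.mul_add_mod, Nat.mod_eq_of_lt hi]

theorem exists_serialize_eq_some {p : P} (hdvd : s ∣ C) (hcard : (σ' C).card ≤ s)
    (hp : p ∈ σ' C) : ∃ t, C ≤ t ∧ t < C + s ∧ serialize s σ' t = some p := by
  obtain ⟨k, rfl⟩ := hdvd
  obtain ⟨i, hi, hget⟩ := List.getElem_of_mem (Finset.mem_toList.mpr hp)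
  have his : i < s := (Finset.length_toList (σ' (s * k)) ▸ hi).trans_le hcard
  refine ⟨s * k + i, Nat.le_add_right _ _, Nat.add_lt_add_left his _, ?_⟩
  rw [serialize_mul_add his, List.getElem?_eq_getElem hi, hget]

theorem exists_completedAt_le {σ : ℕ → Option P} {t : ℕ} (hrel : rel ρ < t)
    (ht : σ t = some (page ρ)) : ∃ t' ≤ t, CompletedAt rel page σ ρ t' := by
  classical
  have hsent : ∃ u, rel ρ < u ∧ σ u = some (page ρ) := ⟨t, hrel, ht⟩
  obtain ⟨hlt, heq⟩ := Nat.find_spec hsent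
  exact ⟨Nat.find hsent, Nat.find_min' hsent ⟨hrel, ht⟩, hlt, heq,
    fun u hu hfind hσu => Nat.find_min hsent hfind ⟨hu, hσu⟩⟩

theorem exists_completedAt_serialize_lt_add (hdvd : s ∣ C) (hcard : (σ' C).card ≤ s)
    (hrel : rel ρ < C) (hp : page ρ ∈ σ' C) :
    ∃ t < C + s, CompletedAt rel page (serialize s σ') ρ t := by
  obtain ⟨t, hCt, htC, ht⟩ := exists_serialize_eq_some hdvd hcard hp
  obtain ⟨t', ht't, hcompleted⟩ := exists_completedAt_le (hrel.trans_le hCt) ht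
  exact ⟨t', ht't.trans_lt htC, hcompleted⟩

end

theorem stmt_16_general {P R : Type*} (rel : R → ℕ) (page : R → P) (s : ℕ)
    (σ' : ℕ → Finset P) (hcap : ∀ t, (σ' t).card ≤ s)
    (hdiv : ∀ t, ¬ s ∣ t → σ' t = ∅) :
    ∃ σ : ℕ → Option P, ∀ (ρ : R) (C' : ℕ),
      s * ((rel ρ + s - 1) / s) < C' → page ρ ∈ σ' C' →
      ∃ t' ≤ rel ρ + (C' - s * ((rel ρ + s - 1) / s)) + 2 * (s - 1),
        CompletedAt rel page σ ρ t' := by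
  refine ⟨serialize s σ', fun ρ C' hC' hp => ?_⟩
  have hs : 0 < s := (Finset.card_pos.mpr ⟨_, hp⟩).trans_le (hcap C')
  have hdvd : s ∣ C' := by
    by_contra hndvd
    exact Finset.ne_empty_of_mem hp (hdiv C' hndvd)
  have le_round : rel ρ ≤ s * ((rel ρ + s - 1) / s) := le_smul_ceilDiv hs
  have round_le : s * ((rel ρ + s - 1) / s) ≤ rel ρ + s - 1 := Nat.mul_div_le _ _
  obtain ⟨t', ht', hcompleted⟩ :=
    exists_completedAt_serialize_lt_add hdvd (hcap C') (le_round.trans_lt hC') hp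
  exact ⟨t', by lia, hcompleted⟩

theorem stmt_16 {P R : Type*} [Fintype R]
    (rel : R → ℕ) (page : R → P) (s : ℕ) (hs : 1 ≤ s)
    (σ' : ℕ → Finset P) (hcap : ∀ t, (σ' t).card ≤ s)
    (hdiv : ∀ t, ¬ s ∣ t → σ' t = ∅) :
    ∃ σ : ℕ → Option P, ∀ (ρ : R) (C' : ℕ),
      s * ((rel ρ + s - 1) / s) < C' → page ρ ∈ σ' C' →
      ∃ t', rel ρ < t' ∧ t' ≤ rel ρ + (C' - s * ((rel ρ + s - 1) / s)) + 2 * s ∧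
        CompletedAt rel page σ ρ t' := by
  obtain ⟨σ, hσ⟩ := stmt_16_general rel page s σ' hcap hdiv
  refine ⟨σ, fun ρ C' hC' hp => ?_⟩
  obtain ⟨t', ht', hcompleted⟩ := hσ ρ C' hC' hp
  exact ⟨t', hcompleted.1, by lia, hcompleted⟩
end

section
/- Consider a broadcast scheduling instance and integers ℓ ≥ 1 and B ≥ 1. Suppose there exists a batch schedule with capacity B under which every request ρ is completed at some time in [r_ρ + 1, r_ρ + ℓ]. Then there exists a batch schedule σ with capacity B under which every request ρ is completed at some time in [r_ρ + 1, r_ρ + ℓ] and which additionally satisfies: (i) for every page p and every interval of ℓ consecutive time steps, there are at most two times t in the interval with p ∈ σ t; and (ii) for every time t, every page in σ t was requested at some release time in [t − ℓ, t − 1]. -/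
/-!
For each page separately, thin the times at which it is broadcast to a minimal set `S` that still
meets the service window `(r, r + ℓ]` of each of its requests. By minimality every `t ∈ S` is the
only point of `S` in some window, which gives (ii). If `a < b < c` lie in `S`, the window in which
`b` is alone contains neither `a` nor `c`, so it lies strictly between them and `c - a > ℓ`, which
gives (i). Since windows are finite, Zorn's lemma provides `S`.
-/

open Set

theorem exists_lt_lt_of_two_lt_card {α : Type*} [LinearOrder α] {s : Finset α} (hs : 2 < s.card) :
    ∃ a ∈ s, ∃ b ∈ s, ∃ c ∈ s, a < b ∧ b < c := by
  let e : Fin 3 ↪o α := s.orderEmbOfCardLe hs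
  have he (i : Fin 3) : e i ∈ s := s.orderEmbOfCardLe_mem hs i
  exact ⟨e 0, he 0, e 1, he 1, e 2, he 2, e.strictMono (by decide), e.strictMono (by decide)⟩

/-- `S` is a hitting set of the indexed family `F`: it meets every member of `F`.
For scheduling, `F` consists of the service windows of the requests for one page. -/
def IsHittingSet {ι α : Type*} (F : ι → Set α) (S : Set α) : Prop :=
  ∀ i, (S ∩ F i).Nonempty

namespace IsHittingSet

variable {ι α : Type*} {F : ι → Set α} {S T : Set α}

theorem sInter_of_isChain {C : Set (Set α)} (hF : ∀ i, (F i).Finite) (hC : IsChain (· ⊆ ·) C)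
    (hne : C.Nonempty) (hit : ∀ S ∈ C, IsHittingSet F S) : IsHittingSet F (⋂₀ C) := by
  intro i
  by_contra hempty
  have hdir : DirectedOn (· ⊆ ·) (compl '' C) :=
    (hC.symm.image_of_map_rel _ _ compl fun _ _ ↦ compl_subset_compl.2).directedOn
  have hcover : F i ⊆ ⋃₀ (compl '' C) := by
    rw [← compl_sInter, subset_compl_iff_disjoint_left, disjoint_iff_inter_eq_empty]
    exact not_nonempty_iff_eq_empty.1 hempty
  obtain ⟨_, ⟨S, hS, rfl⟩, hFS⟩ :=
    hdir.exists_mem_subset_of_finite_of_subset_sUnion (hne.image _) (hF i) hcover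
  obtain ⟨x, hxS, hxF⟩ := hit S hS i
  exact hFS hxF hxS

theorem exists_subset_minimal (hF : ∀ i, (F i).Finite) (hT : IsHittingSet F T) :
    ∃ S ⊆ T, Minimal (IsHittingSet F) S :=
  zorn_superset_nonempty {S | IsHittingSet F S}
    (fun C hCF hC hne ↦ ⟨⋂₀ C, sInter_of_isChain hF hC hne hCF, fun _ ↦ sInter_subset_of_mem⟩) T hT

theorem exists_inter_eq_singleton_of_minimal (hS : Minimal (IsHittingSet F) S) {x : α}
    (hx : x ∈ S) : ∃ i, S ∩ F i = {x} := by
  have hnot : ¬ IsHittingSet F (S \ {x}) := fun h ↦ hS.notMem_of_prop_sdiff_singleton h hx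
  obtain ⟨i, hi⟩ := not_forall.1 hnot
  refine ⟨i, (hS.prop i).subset_singleton_iff.1 fun y hy ↦ ?_⟩
  by_contra hyx
  exact hi ⟨y, ⟨hy.1, hyx⟩, hy.2⟩

theorem exists_subset_Ioo_of_minimal [LinearOrder α] (hF : ∀ i, (F i).OrdConnected)
    (hS : Minimal (IsHittingSet F) S) {a b c : α} (ha : a ∈ S) (hb : b ∈ S) (hc : c ∈ S)
    (hab : a < b) (hbc : b < c) : ∃ i, F i ⊆ Ioo a c := by
  obtain ⟨i, hi⟩ := exists_inter_eq_singleton_of_minimal hS hb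
  have hbF : b ∈ F i := (hi.ge rfl).2
  have haF : a ∉ F i := fun h ↦ hab.ne (hi.le ⟨ha, h⟩)
  have hcF : c ∉ F i := fun h ↦ hbc.ne' (hi.le ⟨hc, h⟩)
  refine ⟨i, fun x hx ↦ ⟨?_, ?_⟩⟩
  · exact lt_of_not_ge fun hxa ↦ haF ((hF i).out hx hbF ⟨hxa, hab.le⟩)
  · exact lt_of_not_ge fun hcx ↦ hcF ((hF i).out hbF hx ⟨hbc.le, hcx⟩)

theorem add_lt_of_minimal_Ioc {r : ι → ℕ} {ℓ : ℕ} {S : Set ℕ}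
    (hS : Minimal (IsHittingSet fun i ↦ Ioc (r i) (r i + ℓ)) S) {a b c : ℕ}
    (ha : a ∈ S) (hb : b ∈ S) (hc : c ∈ S) (hab : a < b) (hbc : b < c) : a + ℓ < c := by
  obtain ⟨i, hi⟩ := exists_subset_Ioo_of_minimal (fun _ ↦ ordConnected_Ioc) hS ha hb hc hab hbc
  have hℓ : r i < r i + ℓ := nonempty_Ioc.1 (hS.prop i).right
  have hleft : a < r i + 1 := (hi ⟨by lia, by lia⟩).1
  have hright : r i + ℓ < c := (hi ⟨hℓ, le_rfl⟩).2
  lia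

theorem card_le_two_of_minimal_Ioc {r : ι → ℕ} {ℓ : ℕ} {S : Set ℕ}
    (hS : Minimal (IsHittingSet fun i ↦ Ioc (r i) (r i + ℓ)) S) {t₀ : ℕ} {s : Finset ℕ}
    (hs : ↑s ⊆ S ∩ Ico t₀ (t₀ + ℓ)) : s.card ≤ 2 := by
  by_contra! hcard
  obtain ⟨a, ha, b, hb, c, hc, hab, hbc⟩ := exists_lt_lt_of_two_lt_card hcard
  have hac : a + ℓ < c := add_lt_of_minimal_Ioc hS (hs ha).1 (hs hb).1 (hs hc).1 hab hbc
  have hat : t₀ ≤ a := (hs ha).2.1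
  have hct : c < t₀ + ℓ := (hs hc).2.2
  lia

end IsHittingSet

theorem stmt_17_general {P R : Type*} [DecidableEq P] (rel : R → ℕ) (page : R → P) (ℓ B : ℕ)
    (h : ∃ σ₀ : ℕ → Finset P, (∀ t, (σ₀ t).card ≤ B) ∧
      ∀ ρ, ∃ t, rel ρ < t ∧ t ≤ rel ρ + ℓ ∧ page ρ ∈ σ₀ t) :
    ∃ σ : ℕ → Finset P,
      (∀ t, (σ t).card ≤ B) ∧
      (∀ ρ, ∃ t, rel ρ < t ∧ t ≤ rel ρ + ℓ ∧ page ρ ∈ σ t) ∧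
      (∀ (p : P) (t₀ : ℕ), ((Finset.Ico t₀ (t₀ + ℓ)).filter (fun t => p ∈ σ t)).card ≤ 2) ∧
      (∀ (t : ℕ) (p : P), p ∈ σ t → ∃ ρ, page ρ = p ∧ rel ρ < t ∧ t ≤ rel ρ + ℓ) := by
  classical
  obtain ⟨σ₀, hcap, hserve⟩ := h
  let window (p : P) (ρ : {ρ // page ρ = p}) : Set ℕ := Ioc (rel ρ) (rel ρ + ℓ)
  have hit (p : P) : IsHittingSet (window p) {t | p ∈ σ₀ t} := by
    rintro ⟨ρ, rfl⟩
    obtain ⟨t, hlt, hle, ht⟩ := hserve ρ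
    exact ⟨t, ht, hlt, hle⟩
  choose S hSσ₀ hS using fun p ↦ (hit p).exists_subset_minimal fun _ ↦ finite_Ioc _ _
  refine ⟨fun t ↦ {p ∈ σ₀ t | t ∈ S p}, fun t ↦ (Finset.card_filter_le _ _).trans (hcap t),
    fun ρ ↦ ?_, fun p t₀ ↦ ?_, fun t p hp ↦ ?_⟩
  · obtain ⟨t, htS, hlt, hle⟩ := (hS (page ρ)).prop ⟨ρ, rfl⟩
    exact ⟨t, hlt, hle, Finset.mem_filter.2 ⟨hSσ₀ _ htS, htS⟩⟩
  · refine IsHittingSet.card_le_two_of_minimal_Ioc (hS p) (t₀ := t₀) fun t ht ↦ ?_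
    obtain ⟨htIco, htσ⟩ := Finset.mem_filter.1 ht
    exact ⟨(Finset.mem_filter.1 htσ).2, Finset.mem_Ico.1 htIco⟩
  · obtain ⟨⟨ρ, hρ⟩, hi⟩ :=
      IsHittingSet.exists_inter_eq_singleton_of_minimal (hS p) (Finset.mem_filter.1 hp).2
    exact ⟨ρ, hρ, (hi.ge rfl).2⟩

theorem stmt_17 {P R : Type*} [Fintype R] [DecidableEq P]
    (rel : R → ℕ) (page : R → P) (ℓ B : ℕ) (hℓ : 1 ≤ ℓ) (hB : 1 ≤ B)
    (h : ∃ σ₀ : ℕ → Finset P, (∀ t, (σ₀ t).card ≤ B) ∧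
      ∀ ρ, ∃ t, rel ρ < t ∧ t ≤ rel ρ + ℓ ∧ page ρ ∈ σ₀ t) :
    ∃ σ : ℕ → Finset P,
      (∀ t, (σ t).card ≤ B) ∧
      (∀ ρ, ∃ t, rel ρ < t ∧ t ≤ rel ρ + ℓ ∧ page ρ ∈ σ t) ∧
      (∀ (p : P) (t₀ : ℕ), ((Finset.Ico t₀ (t₀ + ℓ)).filter (fun t => p ∈ σ t)).card ≤ 2) ∧
      (∀ (t : ℕ) (p : P), p ∈ σ t → ∃ ρ, page ρ = p ∧ rel ρ < t ∧ t ≤ rel ρ + ℓ) :=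
  stmt_17_general rel page ℓ B h
end
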